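/- arXiv:0904.0211 — 4 statements merged into one kernel-verified Lean document; each statement's English description precedes it below -/
import Mathlib

section
/- Let A : ℝ → M₃(ℂ) be a continuous family of 3×3 complex matrices such that A(s) is Hermitian for every s ∈ ℝ, and let V₁, V₂ : ℝ → ℂ³ be two solutions of the system −i V'(s) = A(s) V(s). For u, v ∈ ℂ³ define the wedge product u ∧ v ∈ ℂ³ as the complex conjugate of the standard cross product, i.e. u ∧ v = (conj(u₂v₃ − u₃v₂), conj(u₃v₁ − u₁v₃), conj(u₁v₂ − u₂v₁)). Then, for any fixed s₀ ∈ ℝ, the function W(s) = exp(i·∫_{s₀}^{s} Tr A(s') ds')·(V₁(s) ∧ V₂(s)) is also a solution of −i W'(s) = A(s) W(s). -/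
open Matrix

/-- Complex wedge product on `ℂ³`: the complex conjugate of the standard cross product,
`u ∧ v = (conj(u₂v₃ − u₃v₂), conj(u₃v₁ − u₁v₃), conj(u₁v₂ − u₂v₁))`. -/
def cwedge (u v : Fin 3 → ℂ) : Fin 3 → ℂ :=
  ![(starRingEnd ℂ) (u 1 * v 2 - u 2 * v 1),
    (starRingEnd ℂ) (u 2 * v 0 - u 0 * v 2),
    (starRingEnd ℂ) (u 0 * v 1 - u 1 * v 0)]

/-- If `A(s)` is a continuous family of Hermitian 3×3 matrices and `V₁, V₂` solve
`−i V' = A(s) V`, then `W(s) = exp(i ∫_{s₀}^s Tr A) · (V₁(s) ∧ V₂(s))` also solves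
`−i W' = A(s) W`. -/
theorem wedge_of_solutions_is_solution (A : ℝ → Matrix (Fin 3) (Fin 3) ℂ)
    (hAcont : Continuous A) (hAherm : ∀ s : ℝ, (A s).IsHermitian)
    (V₁ V₂ : ℝ → Fin 3 → ℂ)
    (hV₁ : ∀ s : ℝ, HasDerivAt V₁ (Complex.I • (A s).mulVec (V₁ s)) s)
    (hV₂ : ∀ s : ℝ, HasDerivAt V₂ (Complex.I • (A s).mulVec (V₂ s)) s)
    (s₀ : ℝ) :
    ∀ s : ℝ, HasDerivAt
      (fun s : ℝ => Complex.exp (Complex.I * ∫ t in s₀..s, (A t).trace) •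
        cwedge (V₁ s) (V₂ s))
      (Complex.I • (A s).mulVec
        (Complex.exp (Complex.I * ∫ t in s₀..s, (A t).trace) •
          cwedge (V₁ s) (V₂ s))) s := by
  intro s
  have htr : Continuous fun t => (A t).trace := hAcont.matrix_trace
  have hint : HasDerivAt (fun s : ℝ => ∫ t in s₀..s, (A t).trace) (A s).trace s :=
    intervalIntegral.integral_hasDerivAt_right (htr.intervalIntegrable _ _)
      htr.stronglyMeasurable.stronglyMeasurableAtFilter htr.continuousAt
  have hexp := (hint.const_mul Complex.I).cexp
  have h1 := fun i => (hasDerivAt_pi.1 (hV₁ s)) i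
  have h2 := fun i => (hasDerivAt_pi.1 (hV₂ s)) i
  have hc : ∀ i j : Fin 3, (starRingEnd ℂ) (A s i j) = A s j i := fun i j =>
    (hAherm s).apply j i
  have key : ∀ i j : Fin 3, HasDerivAt
      (fun s : ℝ => (starRingEnd ℂ) (V₁ s i * V₂ s j - V₁ s j * V₂ s i)) _ s := fun i j =>
    HasDerivAt.star ((((h1 i).mul (h2 j)).sub ((h1 j).mul (h2 i))))
  rw [hasDerivAt_pi]
  intro i
  fin_cases i
  · refine (hexp.mul (key 1 2)).congr_deriv ?_
    simp [cwedge, Matrix.mulVec, dotProduct, Fin.sum_univ_three, Matrix.trace, hc]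
    ring
  · refine (hexp.mul (key 2 0)).congr_deriv ?_
    simp [cwedge, Matrix.mulVec, dotProduct, Fin.sum_univ_three, Matrix.trace, hc]
    ring
  · refine (hexp.mul (key 0 1)).congr_deriv ?_
    simp [cwedge, Matrix.mulVec, dotProduct, Fin.sum_univ_three, Matrix.trace, hc]
    ring
end

section
/- For p = (p₁,p₂) ∈ ℝ² with p ≠ 0, define the 3×3 real matrix R(p) = (1/|p|)·[[|p|, 0, 0],[0, −p₁, −p₂],[0, p₂, −p₁]]. Then R(p) is an orthogonal matrix (in particular invertible), and for every q = (q₁,q₂) ∈ ℝ² one has R(p) · W(q) · R(p)ᵀ = −W((p·q)/|p|, (p∧q)/|p|), where p·q = p₁q₁ + p₂q₂ and p∧q = p₁q₂ − p₂q₁. -/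
open Matrix

/-- `W(a,b)`: the 3×3 real matrix with rows `(0, a, b)`, `(a, 0, 0)`, `(b, 0, 0)`. -/
def Wmat (a b : ℝ) : Matrix (Fin 3) (Fin 3) ℝ :=
  !![0, a, b; a, 0, 0; b, 0, 0]

/-- `R(p) = (1/|p|)·[[|p|, 0, 0],[0, −p₁, −p₂],[0, p₂, −p₁]]` for `p = (p₁,p₂) ≠ 0`. -/
noncomputable def Rmat (p₁ p₂ : ℝ) : Matrix (Fin 3) (Fin 3) ℝ :=
  (1 / Real.sqrt (p₁ ^ 2 + p₂ ^ 2)) •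
    !![Real.sqrt (p₁ ^ 2 + p₂ ^ 2), 0, 0; 0, -p₁, -p₂; 0, p₂, -p₁]

/-- For `p ≠ 0`, `R(p)` is orthogonal (in particular invertible) and
`R(p) · W(q) · R(p)ᵀ = −W((p·q)/|p|, (p∧q)/|p|)`. -/
theorem Rmat_orthogonal_conj_Wmat (p₁ p₂ : ℝ) (hp : (p₁, p₂) ≠ (0, 0)) :
    (Rmat p₁ p₂ * (Rmat p₁ p₂)ᵀ = 1 ∧ (Rmat p₁ p₂)ᵀ * Rmat p₁ p₂ = 1) ∧
      IsUnit (Rmat p₁ p₂) ∧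
      ∀ q₁ q₂ : ℝ,
        Rmat p₁ p₂ * Wmat q₁ q₂ * (Rmat p₁ p₂)ᵀ =
          -Wmat ((p₁ * q₁ + p₂ * q₂) / Real.sqrt (p₁ ^ 2 + p₂ ^ 2))
            ((p₁ * q₂ - p₂ * q₁) / Real.sqrt (p₁ ^ 2 + p₂ ^ 2)) := by
  have hpos : 0 < p₁ ^ 2 + p₂ ^ 2 := by
    by_contra h
    apply hp
    have h1 : p₁ = 0 := by nlinarith [sq_nonneg p₁, sq_nonneg p₂]
    have h2 : p₂ = 0 := by nlinarith [sq_nonneg p₁, sq_nonneg p₂]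
    rw [h1, h2]
  have hs : 0 < Real.sqrt (p₁ ^ 2 + p₂ ^ 2) := Real.sqrt_pos.mpr hpos
  have hsq : Real.sqrt (p₁ ^ 2 + p₂ ^ 2) ^ 2 = p₁ ^ 2 + p₂ ^ 2 := Real.sq_sqrt hpos.le
  have hR : Rmat p₁ p₂ * (Rmat p₁ p₂)ᵀ = 1 := by
    unfold Rmat
    generalize Real.sqrt (p₁ ^ 2 + p₂ ^ 2) = s at hs hsq
    have hs0 : s ≠ 0 := hs.ne'
    ext i j
    fin_cases i <;> fin_cases j <;>
      simp [Matrix.mul_apply, Fin.sum_univ_three] <;> field_simp <;> grind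
  refine ⟨⟨hR, mul_eq_one_comm.mp hR⟩, IsUnit.of_mul_eq_one _ hR, ?_⟩
  intro q₁ q₂
  unfold Rmat Wmat
  generalize Real.sqrt (p₁ ^ 2 + p₂ ^ 2) = s at hs hsq
  have hs0 : s ≠ 0 := hs.ne'
  ext i j
  fin_cases i <;> fin_cases j <;>
    simp [Matrix.mul_apply, Fin.sum_univ_three] <;> field_simp <;> ring
end

section
/- Let α ∈ ℝ, β ∈ ℝ, δ > 0, and let w : ℂ → ℂ be continuous and bounded on the vertical segment {α + iu : 0 ≤ u ≤ δ}. Then lim_{s → +∞} (s²/2)^{1+iβ} · ∫₀^δ e^{−s² u / 2}·u^{iβ}·w(α + iu) du = Γ(1 + iβ)·w(α), where for r > 0 and real β, r^{iβ} = e^{iβ·log r}, and Γ is the complex Gamma function. -/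
open Complex Filter

lemma vsa_aux (α β δ : ℝ) (hδ : 0 < δ) (w : ℂ → ℂ) (r : ℝ) (hr : 0 < r) :
    (r : ℂ) ^ ((1 : ℂ) + Complex.I * (β : ℂ)) *
          (∫ u in (0:ℝ)..δ, Complex.exp (-(r * u : ℂ)) *
            (u : ℂ) ^ (Complex.I * (β : ℂ)) * w ((α : ℂ) + Complex.I * u))
    = ∫ t in Set.Ioi (0:ℝ), (Set.Ioc 0 (r * δ)).indicator (fun t : ℝ => Complex.exp (-(t:ℂ)) *
        (t : ℂ) ^ (Complex.I * (β : ℂ)) * w ((α : ℂ) + Complex.I * ((t / r : ℝ) : ℂ))) t := by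
  have hrC : (r : ℂ) ≠ 0 := by exact_mod_cast hr.ne'
  rw [MeasureTheory.setIntegral_indicator measurableSet_Ioc,
    Set.inter_eq_right.2 (fun x hx => hx.1), ← intervalIntegral.integral_of_le (by positivity)]
  have h := intervalIntegral.integral_comp_mul_left (a := 0) (b := δ) (fun t : ℝ => Complex.exp (-(t:ℂ)) *
        (t : ℂ) ^ (Complex.I * (β : ℂ)) * w ((α : ℂ) + Complex.I * ((t / r : ℝ) : ℂ))) hr.ne'
  rw [mul_zero] at h
  have h2 := congrArg (fun z : ℂ => (r : ℂ) * z) h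
  simp only [Complex.real_smul, Complex.ofReal_inv, mul_inv_cancel_left₀ hrC] at h2
  rw [← h2, Complex.cpow_add _ _ hrC, Complex.cpow_one, mul_assoc,
    ← intervalIntegral.integral_const_mul]
  congr 1
  apply intervalIntegral.integral_congr
  intro u hu
  rw [Set.uIcc_of_le hδ.le] at hu
  simp only
  rw [Complex.ofReal_mul, Complex.mul_cpow_ofReal_nonneg hr.le hu.1, mul_div_cancel_left₀ _ hr.ne']
  ring

/-- Asymptotics of the vertical-segment contribution near the branch point:
`(s²/2)^{1+iβ} ∫₀^δ e^{−s²u/2} u^{iβ} w(α+iu) du → Γ(1+iβ)·w(α)` as `s → +∞`. -/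
theorem vertical_segment_asymptotics_log
    (α β δ : ℝ) (hδ : 0 < δ) (w : ℂ → ℂ)
    (hw : ContinuousOn w {c : ℂ | ∃ u ∈ Set.Icc (0 : ℝ) δ, c = (α : ℂ) + Complex.I * u})
    (hbdd : ∃ M : ℝ, ∀ c ∈ {c : ℂ | ∃ u ∈ Set.Icc (0 : ℝ) δ, c = (α : ℂ) + Complex.I * u},
      ‖w c‖ ≤ M) :
    Tendsto (fun s : ℝ =>
        ((s ^ 2 / 2 : ℝ) : ℂ) ^ ((1 : ℂ) + Complex.I * (β : ℂ)) *
          ∫ u in (0:ℝ)..δ, Complex.exp (-(s : ℂ) ^ 2 * (u : ℂ) / 2) *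
            (u : ℂ) ^ (Complex.I * (β : ℂ)) * w ((α : ℂ) + Complex.I * u))
      atTop (nhds (Complex.Gamma (1 + Complex.I * (β : ℂ)) * w (α : ℂ))) := by
  obtain ⟨M, hM⟩ := hbdd
  have hM0 : 0 ≤ M := (norm_nonneg _).trans (hM (α : ℂ) ⟨0, ⟨le_rfl, hδ.le⟩, by simp⟩)
  have hmem : ∀ r : ℝ, 0 < r → ∀ t ∈ Set.Ioc 0 (r * δ), t / r ∈ Set.Icc (0:ℝ) δ := by
    intro r hr t ht
    exact ⟨div_nonneg ht.1.le hr.le, by rw [div_le_iff₀ hr, mul_comm]; exact ht.2⟩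
  have hv : ContinuousOn (fun u : ℝ => w ((α : ℂ) + Complex.I * (u : ℂ))) (Set.Icc 0 δ) :=
    hw.comp (by fun_prop) (fun u hu => ⟨u, hu, rfl⟩)
  have hG : Complex.Gamma (1 + Complex.I * (β : ℂ)) * w (α : ℂ) =
      ∫ t in Set.Ioi (0:ℝ), Complex.exp (-(t:ℂ)) * (t : ℂ) ^ (Complex.I * (β : ℂ)) * w (α : ℂ) := by
    rw [Complex.Gamma_eq_integral (by simp), Complex.GammaIntegral,
      ← MeasureTheory.integral_mul_const]
    simp
  have key : Tendsto (fun r : ℝ => ∫ t in Set.Ioi (0:ℝ), (Set.Ioc 0 (r * δ)).indicator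
      (fun t : ℝ => Complex.exp (-(t:ℂ)) *
        (t : ℂ) ^ (Complex.I * (β : ℂ)) * w ((α : ℂ) + Complex.I * ((t / r : ℝ) : ℂ))) t)
      atTop (nhds (Complex.Gamma (1 + Complex.I * (β : ℂ)) * w (α : ℂ))) := by
    rw [hG]
    apply MeasureTheory.tendsto_integral_filter_of_dominated_convergence
      (fun t => Real.exp (-t) * M)
    · filter_upwards [eventually_gt_atTop 0] with r hr
      apply MeasureTheory.AEStronglyMeasurable.restrict
      rw [aestronglyMeasurable_indicator_iff measurableSet_Ioc]
      apply ContinuousOn.aestronglyMeasurable _ measurableSet_Ioc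
      apply ContinuousOn.mul
      · apply ContinuousOn.mul (by fun_prop)
        intro t ht
        exact ((Complex.continuousAt_ofReal_cpow_const t _ (Or.inr ht.1.ne'))).continuousWithinAt
      · exact hv.comp (f := fun t : ℝ => t / r) (by fun_prop) (hmem r hr)
    · filter_upwards [eventually_gt_atTop 0] with r hr
      filter_upwards [MeasureTheory.ae_restrict_mem measurableSet_Ioi] with t ht
      by_cases h : t ∈ Set.Ioc 0 (r * δ)
      · rw [Set.indicator_of_mem h, norm_mul, norm_mul, Complex.norm_cpow_eq_rpow_re_of_pos ht,
          Complex.norm_exp]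
        simp only [Complex.neg_re, Complex.ofReal_re, Complex.mul_re, Complex.I_re, Complex.I_im,
          Complex.ofReal_im, zero_mul, mul_zero, sub_zero, Real.rpow_zero, mul_one]
        gcongr
        exact hM _ ⟨t / r, hmem r hr t h, rfl⟩
      · rw [Set.indicator_of_notMem h, norm_zero]
        positivity
    · exact (integrableOn_exp_neg_Ioi 0).mul_const M
    · filter_upwards [MeasureTheory.ae_restrict_mem measurableSet_Ioi] with t ht
      have ht' : 0 < t := ht
      have hlim : Tendsto (fun r : ℝ => t / r) atTop (nhdsWithin 0 (Set.Icc 0 δ)) := by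
        apply tendsto_nhdsWithin_iff.2 ⟨tendsto_const_nhds.div_atTop tendsto_id, ?_⟩
        filter_upwards [eventually_gt_atTop 0, eventually_ge_atTop (t / δ)] with r hr hr2
        exact hmem r hr t ⟨ht', (div_le_iff₀ hδ).1 hr2⟩
      have h1 := (hv 0 ⟨le_rfl, hδ.le⟩).tendsto.comp hlim
      simp only [Complex.ofReal_zero, mul_zero, add_zero] at h1
      refine (h1.const_mul (Complex.exp (-(t:ℂ)) * (t : ℂ) ^ (Complex.I * (β : ℂ)))).congr' ?_
      filter_upwards [eventually_ge_atTop (t / δ)] with r hr2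
      have hm : t ∈ Set.Ioc 0 (r * δ) := ⟨ht', (div_le_iff₀ hδ).1 hr2⟩
      rw [Set.indicator_of_mem hm]
      rfl
  have hs : Tendsto (fun s : ℝ => s ^ 2 / 2) atTop atTop :=
    (tendsto_pow_atTop two_ne_zero).atTop_div_const two_pos
  refine (key.comp hs).congr' ?_
  filter_upwards [eventually_gt_atTop 0] with s hs0
  rw [Function.comp, ← vsa_aux α β δ hδ w (s ^ 2 / 2) (by positivity)]
  congr 1
  apply intervalIntegral.integral_congr
  intro u _
  simp only
  congr 3
  push_cast
  ring
end

section
/- Let α ∈ ℝ, δ > 0, and let w : ℂ → ℂ be continuous and bounded on the vertical segment {α + iu : 0 ≤ u ≤ δ}. Then lim_{s → +∞} s · ∫₀^δ e^{−s² u / 2}·u^{−1/2}·w(α + iu) du = √(2π)·w(α). -/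
open Complex Filter

/-- Asymptotics of the vertical-segment contribution for the square-root singularity:
`s·∫₀^δ e^{−s²u/2} u^{−1/2} w(α+iu) du → √(2π)·w(α)` as `s → +∞`, where `u^{−1/2}` is the
inverse of the real positive square root. -/
theorem vertical_segment_asymptotics_sqrt
    (α δ : ℝ) (hδ : 0 < δ) (w : ℂ → ℂ)
    (hw : ContinuousOn w {c : ℂ | ∃ u ∈ Set.Icc (0 : ℝ) δ, c = (α : ℂ) + Complex.I * u})
    (hbdd : ∃ M : ℝ, ∀ c ∈ {c : ℂ | ∃ u ∈ Set.Icc (0 : ℝ) δ, c = (α : ℂ) + Complex.I * u},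
      ‖w c‖ ≤ M) :
    Tendsto (fun s : ℝ =>
        (s : ℂ) *
          ∫ u in (0:ℝ)..δ, Complex.exp (-(s : ℂ) ^ 2 * (u : ℂ) / 2) *
            ((Real.sqrt u : ℝ) : ℂ)⁻¹ * w ((α : ℂ) + Complex.I * u))
      atTop (nhds (((Real.sqrt (2 * Real.pi) : ℝ) : ℂ) * w (α : ℂ))) := by
  obtain ⟨M, hM⟩ := hbdd
  classical
  set v : ℝ → ℂ := fun u => w ((α : ℂ) + Complex.I * u) with hv
  have hvc : ContinuousOn v (Set.Icc 0 δ) := by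
    refine hw.comp (f := fun u : ℝ => (α : ℂ) + Complex.I * u) (by fun_prop) ?_
    intro u hu
    exact ⟨u, hu, rfl⟩
  have hvM : ∀ u ∈ Set.Icc (0 : ℝ) δ, ‖v u‖ ≤ M := fun u hu => hM _ ⟨u, hu, rfl⟩
  have h0 : (0 : ℝ) ∈ Set.Icc (0 : ℝ) δ := ⟨le_rfl, hδ.le⟩
  have hM0 : 0 ≤ M := (norm_nonneg _).trans (hvM 0 h0)
  have hv0 : v 0 = w α := by simp [hv]
  set g : ℝ → ℂ := (Set.Icc (0 : ℝ) δ).piecewise v 0 with hg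
  have hgm : Measurable g :=
    ContinuousOn.measurable_piecewise hvc continuousOn_const measurableSet_Icc
  have hgM : ∀ u, ‖g u‖ ≤ M := by
    intro u
    by_cases hu : u ∈ Set.Icc (0 : ℝ) δ
    · rw [hg, Set.piecewise_eq_of_mem _ _ _ hu]; exact hvM u hu
    · rw [hg, Set.piecewise_eq_of_notMem _ _ _ hu]; simpa using hM0
  set k : ℝ → ℝ := fun t => Real.exp (-t / 2) * (Real.sqrt t)⁻¹ with hk
  have hkm : Measurable k := by
    rw [hk]; fun_prop
  have hkeq : ∀ t ∈ Set.Ioi (0 : ℝ),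
      t ^ ((1 / 2 : ℝ) - 1) * Real.exp (-((1 / 2 : ℝ) * t)) = k t := by
    intro t ht
    have ht' : (0 : ℝ) < t := ht
    rw [show ((1 / 2 : ℝ) - 1) = -(1 / 2) by norm_num, Real.rpow_neg ht'.le,
      ← Real.sqrt_eq_rpow, mul_comm, hk]
    congr 2
    ring
  have hkint : ∫ t in Set.Ioi (0 : ℝ), k t = Real.sqrt (2 * Real.pi) := by
    rw [← MeasureTheory.setIntegral_congr_fun measurableSet_Ioi hkeq,
      Real.integral_rpow_mul_exp_neg_mul_Ioi (by norm_num) (by norm_num),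
      Real.Gamma_one_half_eq, ← Real.sqrt_eq_rpow, ← Real.sqrt_mul (by norm_num)]
    norm_num
  have hkI : MeasureTheory.IntegrableOn k (Set.Ioi 0) := by
    have h := integrableOn_rpow_mul_exp_neg_mul_rpow (p := 1) (s := (1 / 2 : ℝ) - 1)
      (b := 1 / 2) (by norm_num) (by norm_num) (by norm_num)
    refine h.congr_fun (fun t ht => ?_) measurableSet_Ioi
    rw [← hkeq t ht]
    simp
  have hk0 : ∀ t, 0 ≤ k t := fun t => by rw [hk]; positivity
  have key : Tendsto (fun s : ℝ => ∫ t in Set.Ioi (0 : ℝ), (k t : ℂ) * g ((s ^ 2)⁻¹ * t)) atTop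
      (nhds (∫ t in Set.Ioi (0 : ℝ), (k t : ℂ) * w α)) := by
    refine MeasureTheory.tendsto_integral_filter_of_dominated_convergence (fun t => k t * M) ?_ ?_
      (hkI.mul_const M) ?_
    · refine Eventually.of_forall fun s => Measurable.aestronglyMeasurable ?_
      exact (Complex.measurable_ofReal.comp hkm).mul (hgm.comp (measurable_const_mul _))
    · refine Eventually.of_forall fun s => Eventually.of_forall fun t => ?_
      rw [norm_mul, Complex.norm_real, Real.norm_of_nonneg (hk0 t)]
      exact mul_le_mul_of_nonneg_left (hgM _) (hk0 t)
    · refine (MeasureTheory.ae_restrict_iff' measurableSet_Ioi).2 (Eventually.of_forall fun t ht => ?_)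
      have ht' : (0 : ℝ) < t := ht
      refine Tendsto.const_mul _ ?_
      have hlim : Tendsto (fun s : ℝ => (s ^ 2)⁻¹ * t) atTop (nhds 0) := by
        have := ((tendsto_pow_atTop (α := ℝ) (n := 2) (by norm_num)).inv_tendsto_atTop).mul_const t
        simpa using this
      have hmem : ∀ᶠ s : ℝ in atTop, (s ^ 2)⁻¹ * t ∈ Set.Icc (0 : ℝ) δ := by
        filter_upwards [hlim.eventually (gt_mem_nhds hδ)] with s hs
        exact ⟨by positivity, hs.le⟩
      have h1 : Tendsto (fun s : ℝ => v ((s ^ 2)⁻¹ * t)) atTop (nhds (w α)) := by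
        rw [← hv0]
        exact (hvc 0 h0).tendsto.comp (tendsto_nhdsWithin_iff.2 ⟨hlim, hmem⟩)
      refine h1.congr' ?_
      filter_upwards [hmem] with s hs
      rw [hg, Set.piecewise_eq_of_mem _ _ _ hs]
  rw [MeasureTheory.integral_mul_const, integral_complex_ofReal, hkint] at key
  refine key.congr' ?_
  filter_upwards [eventually_gt_atTop 0] with s hs
  have hsC : (s : ℂ) ≠ 0 := by exact_mod_cast hs.ne'
  set H : ℝ → ℂ := fun u => Complex.exp (-(s : ℂ) ^ 2 * (u : ℂ) / 2) *
            ((Real.sqrt u : ℝ) : ℂ)⁻¹ * g u with hH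
  have e1 : (∫ u in (0:ℝ)..δ, Complex.exp (-(s : ℂ) ^ 2 * (u : ℂ) / 2) *
            ((Real.sqrt u : ℝ) : ℂ)⁻¹ * v u) = ∫ u in Set.Ioi (0 : ℝ), H u := by
    rw [intervalIntegral.integral_of_le hδ.le]
    rw [MeasureTheory.setIntegral_eq_of_subset_of_forall_sdiff_eq_zero (f := H) (s := Set.Ioc 0 δ) measurableSet_Ioi
      Set.Ioc_subset_Ioi_self]
    · refine MeasureTheory.setIntegral_congr_fun measurableSet_Ioc fun u hu => ?_
      simp only [hH]
      rw [hg, Set.piecewise_eq_of_mem _ _ _ (Set.Ioc_subset_Icc_self hu)]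
    · intro u hu
      have : u ∉ Set.Icc (0 : ℝ) δ := fun h => hu.2 ⟨hu.1, h.2⟩
      simp only [hH]
      rw [hg, Set.piecewise_eq_of_notMem _ _ _ this]
      simp
  have hb : 0 < (s ^ 2)⁻¹ := by positivity
  have e2 := MeasureTheory.integral_comp_mul_left_Ioi' H 0 hb
  rw [mul_zero] at e2
  have e3 : ∀ t ∈ Set.Ioi (0 : ℝ),
      H ((s ^ 2)⁻¹ * t) = (s : ℂ) * ((k t : ℂ) * g ((s ^ 2)⁻¹ * t)) := by
    intro t ht
    have a1 : Real.sqrt ((s ^ 2)⁻¹ * t) = s⁻¹ * Real.sqrt t := by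
      rw [Real.sqrt_mul hb.le, Real.sqrt_inv, Real.sqrt_sq hs.le]
    have a2 : -(s : ℂ) ^ 2 * (((s ^ 2)⁻¹ * t : ℝ) : ℂ) / 2 = ((-t / 2 : ℝ) : ℂ) := by
      push_cast
      field_simp
    simp only [hH, hk]
    rw [a1, a2]
    push_cast
    rw [mul_inv, inv_inv]
    ring
  rw [e1, ← e2, MeasureTheory.setIntegral_congr_fun measurableSet_Ioi e3, MeasureTheory.integral_const_mul,
    Complex.real_smul]
  push_cast
  field_simp
end
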